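/- For every integer n ≥ 5, there exist a line ℓ and an ℓ-critical set C = A ∪ B of points in the plane in general position with |A| = 4 and |B| = n such that there is no ℓ-divided 5-hole in C. -/

import Mathlib

noncomputable section

/-- Points of the plane. -/
abbrev Pt : Type := ℝ × ℝ

/-- The cross product (signed area) of two planar vectors. -/
def cross2 (u v : Pt) : ℝ := u.1 * v.2 - u.2 * v.1

/-- The dot product of two planar vectors. -/
def dotp (v p : Pt) : ℝ := v.1 * p.1 + v.2 * p.2

/-- A set of points in the plane is in general position if no three of its points
are collinear. -/
def GenPos (P : Set Pt) : Prop :=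
  ∀ p ∈ P, ∀ q ∈ P, ∀ r ∈ P, p ≠ q → p ≠ r → q ≠ r →
    ¬ Collinear ℝ ({p, q, r} : Set Pt)

/-- A set of points is in convex position if no point of the set lies in the convex
hull of the other points. -/
def ConvexPos (S : Set Pt) : Prop :=
  ∀ p ∈ S, p ∉ convexHull ℝ (S \ {p})

/-- `H` is a `k`-hole in `P`: a subset of `P` of size `k` in convex position whose
convex hull contains no point of `P \ H`. -/
def IsKHole (k : ℕ) (P H : Finset Pt) : Prop :=
  H ⊆ P ∧ H.card = k ∧ ConvexPos (↑H : Set Pt) ∧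
    ∀ p ∈ P, p ∉ H → p ∉ convexHull ℝ (↑H : Set Pt)

/-- The number of `k`-holes in `P`. -/
def numKHoles (k : ℕ) (P : Finset Pt) : ℕ :=
  Set.ncard {H : Finset Pt | IsKHole k P H}

/-- For an `ℓ`-divided set `P = A ∪ B`, an `ℓ`-divided 5-hole is a 5-hole in `A ∪ B`
containing points of both `A` and `B`. -/
def DividedFiveHole (A B H : Finset Pt) : Prop :=
  IsKHole 5 (A ∪ B) H ∧ (↑H ∩ ↑A : Set Pt).Nonempty ∧ (↑H ∩ ↑B : Set Pt).Nonempty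

/-- `x` is an extremal point of `P`: it lies on the boundary of the convex hull of `P`. -/
def OnHullBoundary (P : Finset Pt) (x : Pt) : Prop :=
  x ∈ frontier (convexHull ℝ (↑P : Set Pt))

/-- An `ℓ`-divided set `C = A ∪ B` is `ℓ`-critical if neither part is in convex position
and, for every extremal point `x` of `C`, one of the sets `(C \ {x}) ∩ A` and
`(C \ {x}) ∩ B` is in convex position. -/
def LCritical (A B : Finset Pt) : Prop :=
  ¬ ConvexPos (↑A : Set Pt) ∧ ¬ ConvexPos (↑B : Set Pt) ∧
    ∀ x ∈ A ∪ B, OnHullBoundary (A ∪ B) x →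
      (ConvexPos (↑(A.erase x) : Set Pt) ∨ ConvexPos (↑(B.erase x) : Set Pt))

/-- The closed wedge with apex `a` swept clockwise from the ray `a→p` to the ray `a→q`.
If the clockwise angle from `a→p` to `a→q` is at most `π` the wedge is convex, otherwise
it is the corresponding reflex region. -/
def Wedge (a p q : Pt) : Set Pt :=
  if cross2 (p - a) (q - a) ≤ 0 then
    {x | cross2 (p - a) (x - a) ≤ 0 ∧ 0 ≤ cross2 (q - a) (x - a)}
  else
    {x | cross2 (p - a) (x - a) ≤ 0 ∨ 0 ≤ cross2 (q - a) (x - a)}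

/-- `W` is an `a`-wedge of `A`: one of the closed regions into which the rays from `a`
through the other points of `A` partition the plane, i.e. a wedge spanned by two
points of `A \ {a}` that are angularly consecutive around `a` (no other point of `A`
lies in the wedge). -/
def IsAWedge (A : Finset Pt) (a : Pt) (W : Set Pt) : Prop :=
  ∃ p ∈ A.erase a, ∃ q ∈ A.erase a, p ≠ q ∧ W = Wedge a p q ∧
    (↑A : Set Pt) ∩ Wedge a p q ⊆ {a, p, q}

/-- The combinatorial data of the `a*`-wedges of an `ℓ`-divided set `P = A ∪ B`, where
`ℓ` is the vertical line `x = x0` and `A` lies to its left: `aStar` is the rightmost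
interior point `a*` of `A`; `lbl` is the clockwise cyclic labeling `a_0, a_1, …` of
`A \ {a*}` (period `|A| - 1`), so that the `k`-th wedge `W_k` is swept clockwise from
the ray through `lbl (k-1)` to the ray through `lbl k` and contains no other point
of `A`; the wedges `W_1, …, W_t` are exactly those meeting `ℓ`, in top-to-bottom
order along `ℓ`. -/
structure StarSetup (x0 : ℝ) (A : Finset Pt) where
  aStar : Pt
  lbl : ℕ → Pt
  t : ℕ
  aStar_mem : aStar ∈ A
  aStar_interior : aStar ∈ interior (convexHull ℝ (↑A : Set Pt))
  aStar_rightmost : ∀ p ∈ A, p ∈ interior (convexHull ℝ (↑A : Set Pt)) → p.1 ≤ aStar.1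
  lbl_mem : ∀ k, lbl k ∈ A.erase aStar
  lbl_periodic : ∀ k, lbl (k + (A.card - 1)) = lbl k
  lbl_bij : ∀ p ∈ A.erase aStar, ∃! k, k ∈ Finset.Icc 1 (A.card - 1) ∧ lbl k = p
  consec : ∀ k ∈ Finset.Icc 1 (A.card - 1),
    (↑A : Set Pt) ∩ Wedge aStar (lbl (k - 1)) (lbl k) ⊆ {aStar, lbl (k - 1), lbl k}
  t_pos : 1 ≤ t
  t_le : t ≤ A.card - 1
  inter_iff : ∀ k ∈ Finset.Icc 1 (A.card - 1),
    ((Wedge aStar (lbl (k - 1)) (lbl k)) ∩ {p : Pt | p.1 = x0}).Nonempty ↔ k ≤ t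
  ordered : ∀ k ∈ Finset.Icc 1 t, ∀ k' ∈ Finset.Icc 1 t, k < k' →
    ∀ p ∈ (Wedge aStar (lbl (k - 1)) (lbl k)) ∩ {q : Pt | q.1 = x0},
    ∀ p' ∈ (Wedge aStar (lbl (k' - 1)) (lbl k')) ∩ {q : Pt | q.1 = x0},
      p'.2 ≤ p.2

/-- The `k`-th `a*`-wedge `W_k`. -/
def StarSetup.W {x0 : ℝ} {A : Finset Pt} (S : StarSetup x0 A) (k : ℕ) : Set Pt :=
  Wedge S.aStar (S.lbl (k - 1)) (S.lbl k)

/-- `w_k`, the number of points of `B` in the `k`-th `a*`-wedge. -/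
def StarSetup.w {x0 : ℝ} {A : Finset Pt} (S : StarSetup x0 A) (B : Finset Pt) (k : ℕ) : ℕ :=
  Set.ncard ((↑B : Set Pt) ∩ S.W k)

/-- Orientation of three points. -/
def ori (p q r : Pt) : ℝ := (q.1 - p.1) * (r.2 - p.2) - (q.2 - p.2) * (r.1 - p.1)

/-- `x` is strictly inside the counterclockwise triangle `p q r`. -/
def InT (x p q r : Pt) : Prop := 0 < ori p q x ∧ 0 < ori q r x ∧ 0 < ori r p x

def ip (X : ℝ) : ℝ := 1 / (20 * X)
def tp (X : ℝ) : Pt := (X, 1 - ip X)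
def bt (X : ℝ) : Pt := (X, -(1 - ip X))
def pF : Pt := (-1, 2)
def pN : Pt := (1, 2)
def p3 : Pt := (0, -3/2)
def p4 : Pt := (0, -3)
def pb (M : ℝ) : Pt := (M, 3)

lemma ip1 {X : ℝ} (h : 3 ≤ X) : X * ip X = 1/20 ∧ 0 < ip X ∧ ip X ≤ 1/60 := by
  have h0 : 0 < X := by linarith
  have e : X * ip X = 1/20 := by unfold ip; field_simp
  refine ⟨e, by unfold ip; positivity, ?_⟩
  unfold ip
  rw [div_le_div_iff₀ (by positivity) (by norm_num)]
  linarith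

lemma ip2 (k : ℝ) {X Y : ℝ} (h : 3 ≤ X) (hY : 3 ≤ Y) (hk : k * X ≤ Y) :
    k * ip Y ≤ ip X ∧ k * (X * ip Y) ≤ 1/20 ∧ k/20 ≤ Y * ip X ∧ 0 < X * ip Y ∧ X * ip Y ≤ X / 60
     ∧ 0 < Y * ip X ∧ Y * ip X ≤ Y / 60 := by
  obtain ⟨e1, p1, q1⟩ := ip1 h
  obtain ⟨e2, p2, q2⟩ := ip1 hY
  have h0 : 0 < X := by linarith
  have h0' : 0 < Y := by linarith
  have a2 : k * (X * ip Y) ≤ 1/20 := by nlinarith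
  refine ⟨?_, a2, by nlinarith, by positivity, by nlinarith, by positivity, by nlinarith⟩
  have : X * (k * ip Y) ≤ X * ip X := by linarith
  exact le_of_mul_le_mul_left this h0

/-- Hints for three points. -/
lemma ip3 (k l : ℝ) {X Y Z : ℝ} (h : 3 ≤ X) (hY : 3 ≤ Y) (hZ : 3 ≤ Z) (hk : k * X ≤ Y) (hl : l * Y ≤ Z) :
    l * (Y * ip X) ≤ Z * ip X ∧ k * (Z * ip Y) ≤ Z * ip X := by
  obtain ⟨e1, p1, q1⟩ := ip1 h
  have := (ip2 k h hY hk).1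
  constructor <;> nlinarith
set_option linter.unusedSimpArgs false
set_option linter.unusedVariables false
section facts
variable {X Y Z U V W M : ℝ} {a a' : Pt}

lemma f1T (ha : a = pF ∨ a = pN) (ha' : a' = p3 ∨ a' = p4) (hX : 3 ≤ X) (hM : 27 * X ≤ M) :
    InT (tp X) a a' (pb M) := by
  obtain ⟨e1, p1, q1⟩ := ip1 hX
  have hM' : 3 ≤ M := by linarith
  obtain ⟨c1,c2,c3,c4,c5,c6,c7⟩ := ip2 27 hX hM' hM
  rcases ha with rfl | rfl <;> rcases ha' with rfl | rfl <;>
    simp only [InT, ori, tp, bt, pF, pN, p3, p4, pb] <;> refine ⟨?_, ?_, ?_⟩ <;> linarith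

lemma f1U (ha : a = pF ∨ a = pN) (ha' : a' = p3 ∨ a' = p4) (hX : 3 ≤ X) (hM : 27 * X ≤ M) :
    InT (bt X) a a' (pb M) := by
  obtain ⟨e1, p1, q1⟩ := ip1 hX
  have hM' : 3 ≤ M := by linarith
  obtain ⟨c1,c2,c3,c4,c5,c6,c7⟩ := ip2 27 hX hM' hM
  rcases ha with rfl | rfl <;> rcases ha' with rfl | rfl <;>
    simp only [InT, ori, tp, bt, pF, pN, p3, p4, pb] <;> refine ⟨?_, ?_, ?_⟩ <;> linarith

lemma f2T (ha : a = pF ∨ a = pN) (ha' : a' = p3 ∨ a' = p4) (hX : 3 ≤ X) (hM : 9 * X ≤ Y) :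
    InT (tp X) a a' (tp Y) := by
  obtain ⟨e1, p1, q1⟩ := ip1 hX
  have hY : 3 ≤ Y := by linarith
  obtain ⟨e2, p2, q2⟩ := ip1 hY
  obtain ⟨c1,c2,c3,c4,c5,c6,c7⟩ := ip2 9 hX hY hM
  rcases ha with rfl | rfl <;> rcases ha' with rfl | rfl <;>
    simp only [InT, ori, tp, bt, pF, pN, p3, p4, pb] <;> refine ⟨?_, ?_, ?_⟩ <;> linarith

lemma f2U (ha : a = pF ∨ a = pN) (ha' : a' = p3 ∨ a' = p4) (hX : 3 ≤ X) (hM : 9 * X ≤ Y) :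
    InT (bt X) a a' (bt Y) := by
  obtain ⟨e1, p1, q1⟩ := ip1 hX
  have hY : 3 ≤ Y := by linarith
  obtain ⟨e2, p2, q2⟩ := ip1 hY
  obtain ⟨c1,c2,c3,c4,c5,c6,c7⟩ := ip2 9 hX hY hM
  rcases ha with rfl | rfl <;> rcases ha' with rfl | rfl <;>
    simp only [InT, ori, tp, bt, pF, pN, p3, p4, pb] <;> refine ⟨?_, ?_, ?_⟩ <;> linarith

lemma f3 : InT p3 pF p4 pN := by
  simp only [InT, ori, tp, bt, pF, pN, p3, p4, pb] ; norm_num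

lemma f4 (ha' : a' = p3 ∨ a' = p4) : InT (tp 3) pN a' (bt 9) := by
  rcases ha' with rfl | rfl <;> simp only [InT, ori, tp, bt, pF, pN, p3, p4, pb, ip] <;> norm_num

lemma f4' : InT p3 pF p4 (bt 9) := by
  simp only [InT, ori, tp, bt, pF, pN, p3, p4, pb, ip] ; norm_num

lemma f5T (hX : 3 ≤ X) (hM : 27 * X ≤ M) : InT pN pF (tp X) (pb M) := by
  obtain ⟨e1, p1, q1⟩ := ip1 hX
  have hM' : 3 ≤ M := by linarith
  obtain ⟨c1,c2,c3,c4,c5,c6,c7⟩ := ip2 27 hX hM' hM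
  simp only [InT, ori, tp, bt, pF, pN, p3, p4, pb] ; refine ⟨?_, ?_, ?_⟩ <;> linarith

lemma f5U (hX : 3 ≤ X) (hM : 27 * X ≤ M) : InT pN pF (bt X) (pb M) := by
  obtain ⟨e1, p1, q1⟩ := ip1 hX
  have hM' : 3 ≤ M := by linarith
  obtain ⟨c1,c2,c3,c4,c5,c6,c7⟩ := ip2 27 hX hM' hM
  simp only [InT, ori, tp, bt, pF, pN, p3, p4, pb] ; refine ⟨?_, ?_, ?_⟩ <;> linarith

lemma f6a (ha : a = pF ∨ a = pN) (hX : 3 ≤ X) (hY : 9 * X ≤ Y) (hZ : 9 * Y ≤ Z) :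
    InT (tp Y) a (tp X) (tp Z) := by
  have hY' : 3 ≤ Y := by linarith
  have hZ' : 3 ≤ Z := by linarith
  obtain ⟨e1, p1, q1⟩ := ip1 hX
  obtain ⟨e2, p2, q2⟩ := ip1 hY'
  obtain ⟨e3, p3, q3⟩ := ip1 hZ'
  obtain ⟨c1,c2,c3,c4,c5,c6,c7⟩ := ip2 9 hX hY' hY
  obtain ⟨d1,d2,d3,d4,d5,d6,d7⟩ := ip2 9 hY' hZ' hZ
  obtain ⟨g1,g2,g3,g4,g5,g6,g7⟩ := ip2 9 hX hZ' (by linarith)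
  obtain ⟨k1,k2⟩ := ip3 9 9 hX hY' hZ' hY hZ
  rcases ha with rfl | rfl <;>
    simp only [InT, ori, tp, bt, pF, pN, pb] <;> refine ⟨?_, ?_, ?_⟩ <;> linarith

lemma f7a (ha : a = p3 ∨ a = p4) (hX : 3 ≤ X) (hY : 9 * X ≤ Y) (hZ : 9 * Y ≤ Z) :
    InT (bt Y) a (bt Z) (bt X) := by
  have hY' : 3 ≤ Y := by linarith
  have hZ' : 3 ≤ Z := by linarith
  obtain ⟨e1, p1, q1⟩ := ip1 hX
  obtain ⟨e2, p2, q2⟩ := ip1 hY'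
  obtain ⟨e3, p3, q3⟩ := ip1 hZ'
  obtain ⟨c1,c2,c3,c4,c5,c6,c7⟩ := ip2 9 hX hY' hY
  obtain ⟨d1,d2,d3,d4,d5,d6,d7⟩ := ip2 9 hY' hZ' hZ
  obtain ⟨g1,g2,g3,g4,g5,g6,g7⟩ := ip2 9 hX hZ' (by linarith)
  obtain ⟨k1,k2⟩ := ip3 9 9 hX hY' hZ' hY hZ
  rcases ha with rfl | rfl <;>
    simp only [InT, ori, tp, bt, _root_.p3, p4, pb] <;> refine ⟨?_, ?_, ?_⟩ <;> linarith

/-- Between two bottoms, from `N`: the top `X`. -/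
lemma f6bN (hU : 3 ≤ U) (hX : 3 * U ≤ X) (hV : 3 * X = V) :
    InT (tp X) pN (bt U) (bt V) := by
  have hX' : 3 ≤ X := by linarith
  have hV' : 3 ≤ V := by linarith
  obtain ⟨e1, p1, q1⟩ := ip1 hU
  obtain ⟨e2, p2, q2⟩ := ip1 hX'
  obtain ⟨e3, p3, q3⟩ := ip1 hV'
  obtain ⟨c1,c2,c3,c4,c5,c6,c7⟩ := ip2 3 hU hX' hX
  obtain ⟨d1,d2,d3,d4,d5,d6,d7⟩ := ip2 3 hX' hV' (by linarith)
  obtain ⟨g1,g2,g3,g4,g5,g6,g7⟩ := ip2 9 hU hV' (by linarith)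
  obtain ⟨k1,k2⟩ := ip3 3 3 hU hX' hV' hX hV.le
  simp only [InT, ori, tp, bt, pN, pb] ; refine ⟨?_, ?_, ?_⟩ <;> linarith

/-- Between two bottoms, from `F`: the top `X`. -/
lemma f6bF (hX : 3 ≤ X) (hU : 3 * X = U) (hV : 9 * U ≤ V) :
    InT (tp X) pF (bt U) (bt V) := by
  have hU' : 3 ≤ U := by linarith
  have hV' : 3 ≤ V := by linarith
  obtain ⟨e1, p1, q1⟩ := ip1 hX
  obtain ⟨e2, p2, q2⟩ := ip1 hU'
  obtain ⟨e3, p3, q3⟩ := ip1 hV'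
  obtain ⟨c1,c2,c3,c4,c5,c6,c7⟩ := ip2 3 hX hU' hU.le
  obtain ⟨d1,d2,d3,d4,d5,d6,d7⟩ := ip2 9 hU' hV' hV
  obtain ⟨g1,g2,g3,g4,g5,g6,g7⟩ := ip2 27 hX hV' (by linarith)
  obtain ⟨k1,k2⟩ := ip3 3 9 hX hU' hV' hU.le hV
  have z1 := (ip2 (1/3) hU' hX (by linarith)).2.1
  simp only [InT, ori, tp, bt, pF, pb] ; refine ⟨?_, ?_, ?_⟩ <;> linarith

lemma f6cN (hU : 3 ≤ U) (hX : 3 * U ≤ X) (hY : 9 * X ≤ Y) :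
    InT (tp X) pN (bt U) (tp Y) := by
  have hX' : 3 ≤ X := by linarith
  have hY' : 3 ≤ Y := by linarith
  obtain ⟨e1, p1, q1⟩ := ip1 hU
  obtain ⟨e2, p2, q2⟩ := ip1 hX'
  obtain ⟨e3, p3, q3⟩ := ip1 hY'
  obtain ⟨c1,c2,c3,c4,c5,c6,c7⟩ := ip2 3 hU hX' hX
  obtain ⟨d1,d2,d3,d4,d5,d6,d7⟩ := ip2 9 hX' hY' hY
  obtain ⟨g1,g2,g3,g4,g5,g6,g7⟩ := ip2 27 hU hY' (by linarith)
  obtain ⟨k1,k2⟩ := ip3 3 9 hU hX' hY' hX hY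
  simp only [InT, ori, tp, bt, pN, pb] ; refine ⟨?_, ?_, ?_⟩ <;> linarith

lemma f6cF (hX : 3 ≤ X) (hU : 3 * X = U) (hY : 9 * X ≤ Y) :
    InT (tp X) pF (bt U) (tp Y) := by
  have hU' : 3 ≤ U := by linarith
  have hY' : 3 ≤ Y := by linarith
  obtain ⟨e1, p1, q1⟩ := ip1 hX
  obtain ⟨e2, p2, q2⟩ := ip1 hU'
  obtain ⟨e3, p3, q3⟩ := ip1 hY'
  obtain ⟨c1,c2,c3,c4,c5,c6,c7⟩ := ip2 3 hX hU' hU.le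
  obtain ⟨d1,d2,d3,d4,d5,d6,d7⟩ := ip2 3 hU' hY' (by linarith)
  obtain ⟨g1,g2,g3,g4,g5,g6,g7⟩ := ip2 9 hX hY' (by linarith)
  obtain ⟨k1,k2⟩ := ip3 3 3 hX hU' hY' hU.le (by linarith)
  have z1 := (ip2 (1/3) hU' hX (by linarith)).2.1
  simp only [InT, ori, tp, bt, pF, pb] ; refine ⟨?_, ?_, ?_⟩ <;> linarith

lemma f6d (ha : a = pF ∧ 27 * Y ≤ U ∨ a = pN ∧ 3 * Y ≤ U) (hX : 3 ≤ X) (hY : 9 * X ≤ Y) :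
    InT (tp Y) a (tp X) (bt U) := by
  have hY' : 3 ≤ Y := by linarith
  have hU : 3 * Y ≤ U := by rcases ha with h | h <;> linarith
  have hU' : 3 ≤ U := by linarith
  obtain ⟨e1, p1, q1⟩ := ip1 hX
  obtain ⟨e2, p2, q2⟩ := ip1 hY'
  obtain ⟨e3, p3, q3⟩ := ip1 hU'
  obtain ⟨c1,c2,c3,c4,c5,c6,c7⟩ := ip2 9 hX hY' hY
  obtain ⟨d1,d2,d3,d4,d5,d6,d7⟩ := ip2 3 hY' hU' hU
  obtain ⟨g1,g2,g3,g4,g5,g6,g7⟩ := ip2 27 hX hU' (by linarith)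
  obtain ⟨k1,k2⟩ := ip3 9 3 hX hY' hU' hY hU
  rcases ha with ⟨rfl, h⟩ | ⟨rfl, h⟩ <;>
  simp only [InT, ori, tp, bt, pF, pN, pb] <;> refine ⟨?_, ?_, ?_⟩ <;> linarith

lemma f6eN (hU : 3 ≤ U) (hY : 3 * U ≤ Y) (hM : 27 * Y ≤ M) :
    InT (tp Y) pN (bt U) (pb M) := by
  have hY' : 3 ≤ Y := by linarith
  have hM' : 3 ≤ M := by linarith
  obtain ⟨e1, p1, q1⟩ := ip1 hU
  obtain ⟨e2, p2, q2⟩ := ip1 hY'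
  obtain ⟨c1,c2,c3,c4,c5,c6,c7⟩ := ip2 3 hU hY' hY
  obtain ⟨d1,d2,d3,d4,d5,d6,d7⟩ := ip2 27 hY' hM' hM
  obtain ⟨g1,g2,g3,g4,g5,g6,g7⟩ := ip2 27 hU hM' (by linarith)
  obtain ⟨k1,k2⟩ := ip3 3 27 hU hY' hM' hY hM
  simp only [InT, ori, tp, bt, pN, pb] ; refine ⟨?_, ?_, ?_⟩ <;> linarith

lemma f6eF (hU : 3 ≤ U) (hX : 3 ≤ X) (hUX : U ≤ 3 * X) (hM : 27 * X ≤ M) :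
    InT (tp X) pF (bt U) (pb M) := by
  have hM' : 3 ≤ M := by linarith
  obtain ⟨e1, p1, q1⟩ := ip1 hU
  obtain ⟨e2, p2, q2⟩ := ip1 hX
  obtain ⟨c1,c2,c3,c4,c5,c6,c7⟩ := ip2 (1/3) hU hX (by linarith)
  obtain ⟨d1,d2,d3,d4,d5,d6,d7⟩ := ip2 27 hX hM' hM
  obtain ⟨g1,g2,g3,g4,g5,g6,g7⟩ := ip2 9 hU hM' (by linarith)
  obtain ⟨k1,k2⟩ := ip3 (1/3) 27 hU hX hM' (by linarith) hM
  have z1 : 0 ≤ (1/60 - ip U) * (3 * X - U) := mul_nonneg (by linarith) (by linarith)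
  simp only [InT, ori, tp, bt, pF, pb] ; refine ⟨?_, ?_, ?_⟩ <;> linarith

lemma f7b (ha : a = p3 ∨ a = p4) (hU : 3 ≤ U) (hV : 9 * U ≤ V) (hM : 27 * V ≤ M) :
    InT (bt V) a (pb M) (bt U) := by
  have hY' : 3 ≤ V := by linarith
  have hM' : 3 ≤ M := by linarith
  obtain ⟨e1, p1, q1⟩ := ip1 hU
  obtain ⟨e2, p2, q2⟩ := ip1 hY'
  obtain ⟨c1,c2,c3,c4,c5,c6,c7⟩ := ip2 9 hU hY' hV
  obtain ⟨d1,d2,d3,d4,d5,d6,d7⟩ := ip2 27 hY' hM' hM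
  obtain ⟨g1,g2,g3,g4,g5,g6,g7⟩ := ip2 27 hU hM' (by linarith)
  obtain ⟨k1,k2⟩ := ip3 9 27 hU hY' hM' hV hM
  rcases ha with rfl | rfl <;>
  simp only [InT, ori, tp, bt, _root_.p3, p4, pb] <;> refine ⟨?_, ?_, ?_⟩ <;> linarith

lemma f7c4 (hX : 3 ≤ X) (hU : 3 * X ≤ U) (hV : 9 * U ≤ V) :
    InT (bt U) p4 (bt V) (tp X) := by
  have hU' : 3 ≤ U := by linarith
  have hV' : 3 ≤ V := by linarith
  obtain ⟨e1, p1, q1⟩ := ip1 hX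
  obtain ⟨e2, p2, q2⟩ := ip1 hU'
  obtain ⟨e3, p3, q3⟩ := ip1 hV'
  obtain ⟨c1,c2,c3,c4,c5,c6,c7⟩ := ip2 3 hX hU' hU
  obtain ⟨d1,d2,d3,d4,d5,d6,d7⟩ := ip2 9 hU' hV' hV
  obtain ⟨g1,g2,g3,g4,g5,g6,g7⟩ := ip2 27 hX hV' (by linarith)
  obtain ⟨k1,k2⟩ := ip3 3 9 hX hU' hV' hU hV
  simp only [InT, ori, tp, bt, p4, pb] ; refine ⟨?_, ?_, ?_⟩ <;> linarith

lemma f7c3 (hX : 3 ≤ X) (hU : 3 ≤ U) (hXU : X ≤ 3 * U) (hV : 9 * U ≤ V) :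
    InT (bt U) p3 (bt V) (tp X) := by
  have hV' : 3 ≤ V := by linarith
  obtain ⟨e1, p1, q1⟩ := ip1 hX
  obtain ⟨e2, p2, q2⟩ := ip1 hU
  obtain ⟨e3, r2, q3⟩ := ip1 hV'
  obtain ⟨c1,c2,c3,c4,c5,c6,c7⟩ := ip2 (1/3) hX hU (by linarith)
  obtain ⟨d1,d2,d3,d4,d5,d6,d7⟩ := ip2 9 hU hV' hV
  obtain ⟨g1,g2,g3,g4,g5,g6,g7⟩ := ip2 3 hX hV' (by linarith)
  obtain ⟨k1,k2⟩ := ip3 (1/3) 9 hX hU hV' (by linarith) hV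
  simp only [InT, ori, tp, bt, p3, pb] ; refine ⟨?_, ?_, ?_⟩ <;> linarith

lemma f7d4 (hU : 3 ≤ U) (hV : 9 * U ≤ V) (hX : 3 * V ≤ X) :
    InT (bt V) p4 (tp X) (bt U) := by
  have hV' : 3 ≤ V := by linarith
  have hX' : 3 ≤ X := by linarith
  obtain ⟨e1, p1, q1⟩ := ip1 hU
  obtain ⟨e2, p2, q2⟩ := ip1 hV'
  obtain ⟨e3, p3, q3⟩ := ip1 hX'
  obtain ⟨c1,c2,c3,c4,c5,c6,c7⟩ := ip2 9 hU hV' hV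
  obtain ⟨d1,d2,d3,d4,d5,d6,d7⟩ := ip2 3 hV' hX' hX
  obtain ⟨g1,g2,g3,g4,g5,g6,g7⟩ := ip2 27 hU hX' (by linarith)
  obtain ⟨k1,k2⟩ := ip3 9 3 hU hV' hX' hV hX
  simp only [InT, ori, tp, bt, p4, pb] ; refine ⟨?_, ?_, ?_⟩ <;> linarith

lemma f7e3 (hX : 3 ≤ X) (hU : 3 ≤ U) (hXU : X ≤ 3 * U) (hM : 27 * U ≤ M) :
    InT (bt U) p3 (pb M) (tp X) := by
  have hM' : 3 ≤ M := by linarith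
  obtain ⟨e1, p1, q1⟩ := ip1 hX
  obtain ⟨e2, p2, q2⟩ := ip1 hU
  obtain ⟨c1,c2,c3,c4,c5,c6,c7⟩ := ip2 (1/3) hX hU (by linarith)
  obtain ⟨d1,d2,d3,d4,d5,d6,d7⟩ := ip2 27 hU hM' hM
  obtain ⟨g1,g2,g3,g4,g5,g6,g7⟩ := ip2 9 hX hM' (by linarith)
  obtain ⟨k1,k2⟩ := ip3 (1/3) 27 hX hU hM' (by linarith) hM
  simp only [InT, ori, tp, bt, p3, pb] ; refine ⟨?_, ?_, ?_⟩ <;> linarith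

lemma f7f4 (hX : 3 ≤ X) (hU : 3 * X = U) (hY : 9 * X ≤ Y) :
    InT (bt U) p4 (tp Y) (tp X) := by
  have hU' : 3 ≤ U := by linarith
  have hY' : 3 ≤ Y := by linarith
  obtain ⟨e1, p1, q1⟩ := ip1 hX
  obtain ⟨e2, p2, q2⟩ := ip1 hU'
  obtain ⟨e3, p3, q3⟩ := ip1 hY'
  obtain ⟨c1,c2,c3,c4,c5,c6,c7⟩ := ip2 3 hX hU' hU.le
  obtain ⟨d1,d2,d3,d4,d5,d6,d7⟩ := ip2 3 hU' hY' (by linarith)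
  obtain ⟨g1,g2,g3,g4,g5,g6,g7⟩ := ip2 9 hX hY' hY
  obtain ⟨k1,k2⟩ := ip3 3 3 hX hU' hY' hU.le (by linarith)
  simp only [InT, ori, tp, bt, p4, pb] ; refine ⟨?_, ?_, ?_⟩ <;> linarith

lemma f7f3 (hX : 3 ≤ X) (hU : 3 ≤ U) (hXU : X ≤ 3 * U) (hY : 27 * U ≤ Y) :
    InT (bt U) p3 (tp Y) (tp X) := by
  have hY' : 3 ≤ Y := by linarith
  obtain ⟨e1, p1, q1⟩ := ip1 hX
  obtain ⟨e2, p2, q2⟩ := ip1 hU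
  obtain ⟨e3, r3, q3⟩ := ip1 hY'
  obtain ⟨c1,c2,c3,c4,c5,c6,c7⟩ := ip2 (1/3) hX hU (by linarith)
  obtain ⟨d1,d2,d3,d4,d5,d6,d7⟩ := ip2 27 hU hY' hY
  obtain ⟨g1,g2,g3,g4,g5,g6,g7⟩ := ip2 9 hX hY' (by linarith)
  obtain ⟨k1,k2⟩ := ip3 (1/3) 27 hX hU hY' (by linarith) hY
  simp only [InT, ori, tp, bt, p3, pb] ; refine ⟨?_, ?_, ?_⟩ <;> linarith

/-- `B` is not in convex position. -/
lemma f8 (hX : 3 ≤ X) (hY : 9 * X = Y) (hU : 3 * X = U) (hM : 27 * Y ≤ M) (hM' : M ≤ 81 * Y) :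
    InT (tp Y) (tp X) (bt U) (pb M) := by
  have hU' : 3 ≤ U := by linarith
  have hY' : 3 ≤ Y := by linarith
  have hM3 : 3 ≤ M := by linarith
  obtain ⟨e1, p1, q1⟩ := ip1 hX
  obtain ⟨e2, p2, q2⟩ := ip1 hU'
  obtain ⟨e3, p3, q3⟩ := ip1 hY'
  obtain ⟨c1,c2,c3,c4,c5,c6,c7⟩ := ip2 3 hX hU' hU.le
  obtain ⟨d1,d2,d3,d4,d5,d6,d7⟩ := ip2 3 hU' hY' (by linarith)
  obtain ⟨g1,g2,g3,g4,g5,g6,g7⟩ := ip2 9 hX hY' hY.le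
  obtain ⟨h1,h2,h3,h4,h5,h6,h7⟩ := ip2 243 hX hM3 (by linarith)
  obtain ⟨i1,i2,i3,i4,i5,i6,i7⟩ := ip2 (1/729) hM3 hX (by linarith)
  obtain ⟨j1,j2,j3,j4,j5,j6,j7⟩ := ip2 (1/81) hM3 hY' (by linarith)
  obtain ⟨l1,l2,l3,l4,l5,l6,l7⟩ := ip2 27 hY' hM3 hM
  obtain ⟨k1,k2⟩ := ip3 3 3 hX hU' hY' hU.le (by linarith)
  obtain ⟨m1,m2,m3,m4,m5,m6,m7⟩ := ip2 27 hU' hM3 (by linarith)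
  simp only [InT, ori, tp, bt, pb] ; refine ⟨?_, ?_, ?_⟩ <;> linarith
end facts
lemma inT_mem_convex {S : Set Pt} (hS : Convex ℝ S) {x p q r : Pt} (h : InT x p q r)
    (hp : p ∈ S) (hq : q ∈ S) (hr : r ∈ S) : x ∈ S := by
  obtain ⟨h1, h2, h3⟩ := h
  set D := ori p q x + ori q r x + ori r p x with hD
  have hD0 : 0 < D := by positivity
  have key := hS.sum_mem (t := Finset.univ)
    (w := ![ori q r x / D, ori r p x / D, ori p q x / D]) (z := ![p, q, r])
    (by intro i _; fin_cases i <;> simp <;> positivity)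
    (by simp [Fin.sum_univ_three]; field_simp; rw [hD]; ring)
    (by intro i _; fin_cases i <;> simp [hp, hq, hr])
  convert key using 1
  have e : D = (q.1 - p.1) * (r.2 - p.2) - (q.2 - p.2) * (r.1 - p.1) := by
    rw [hD]; simp only [ori]; ring
  simp only [Fin.sum_univ_three]
  ext
  · simp
    field_simp
    rw [e]; simp only [ori]; ring
  · simp
    field_simp
    rw [e]; simp only [ori]; ring

lemma inT_hull {S : Set Pt} {x p q r : Pt} (h : InT x p q r)
    (hp : p ∈ S) (hq : q ∈ S) (hr : r ∈ S) : x ∈ convexHull ℝ S :=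
  inT_mem_convex (convex_convexHull ℝ S) h (subset_convexHull ℝ S hp) (subset_convexHull ℝ S hq)
    (subset_convexHull ℝ S hr)

lemma inT_interior {S : Set Pt} {x p q r : Pt} (h : InT x p q r)
    (hp : p ∈ S) (hq : q ∈ S) (hr : r ∈ S) : x ∈ interior (convexHull ℝ S) := by
  rw [mem_interior]
  refine ⟨{y | InT y p q r}, fun y hy => inT_hull hy hp hq hr, ?_, h⟩
  have c : ∀ a b : Pt, IsOpen {y : Pt | 0 < ori a b y} := by
    intro a b
    apply isOpen_lt continuous_const
    unfold ori
    fun_prop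
  exact (c p q).inter ((c q r).inter (c r p))

lemma inT_not_frontier {P : Finset Pt} {x p q r : Pt} (h : InT x p q r)
    (hp : p ∈ P) (hq : q ∈ P) (hr : r ∈ P) : ¬ OnHullBoundary P x := fun hx =>
  hx.2 (inT_interior h (Finset.mem_coe.2 hp) (Finset.mem_coe.2 hq) (Finset.mem_coe.2 hr))

lemma inT_ne {x p q r : Pt} (h : InT x p q r) : x ≠ p ∧ x ≠ q ∧ x ≠ r := by
  obtain ⟨h1, h2, h3⟩ := h
  refine ⟨?_, ?_, ?_⟩ <;> rintro rfl <;> simp only [ori] at h1 h2 h3 <;> nlinarith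

lemma not_convexPos {S : Set Pt} {x p q r : Pt} (h : InT x p q r)
    (hx : x ∈ S) (hp : p ∈ S) (hq : q ∈ S) (hr : r ∈ S) : ¬ ConvexPos S := by
  intro hc
  obtain ⟨n1, n2, n3⟩ := inT_ne h
  exact hc x hx (inT_hull h ⟨hp, fun e => n1 e.symm⟩ ⟨hq, fun e => n2 e.symm⟩ ⟨hr, fun e => n3 e.symm⟩)

lemma hole_kill {k : ℕ} {P H : Finset Pt} (hH : IsKHole k P H) {x p q r : Pt} (h : InT x p q r)
    (hx : x ∈ P) (hp : p ∈ H) (hq : q ∈ H) (hr : r ∈ H) : False := by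
  by_cases hxH : x ∈ H
  · exact not_convexPos (S := (↑H : Set Pt)) h hxH hp hq hr hH.2.2.1
  · exact hH.2.2.2 x hx hxH (inT_hull h hp hq hr)

lemma ori_of_collinear {p q r : Pt} (h : Collinear ℝ ({p, q, r} : Set Pt)) : ori p q r = 0 := by
  rw [collinear_iff_of_mem (p₀ := p) (by simp)] at h
  obtain ⟨v, hv⟩ := h
  obtain ⟨a, ha⟩ := hv q (by simp)
  obtain ⟨b, hb⟩ := hv r (by simp)
  rw [ha, hb]
  simp [ori]
  ring

/-- General position in terms of orientations. -/
def GP (S : Set Pt) : Prop :=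
  ∀ p ∈ S, ∀ q ∈ S, ∀ r ∈ S, p ≠ q → p ≠ r → q ≠ r → ori p q r ≠ 0

def PP (a : Pt) (S : Set Pt) : Prop := ∀ q ∈ S, ∀ r ∈ S, q ≠ r → ori a q r ≠ 0

lemma GP.genPos {S : Set Pt} (h : GP S) : GenPos S := fun p hp q hq r hr h1 h2 h3 hc =>
  h p hp q hq r hr h1 h2 h3 (ori_of_collinear hc)

lemma ori_rot (p q r : Pt) : ori p q r = ori q r p := by simp only [ori]; ring
lemma ori_swap (p q r : Pt) : ori p q r = - ori p r q := by simp only [ori]; ring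

lemma GP_insert {a : Pt} {S : Set Pt} (h : GP S) (ha : PP a S) : GP (insert a S) := by
  intro p hp q hq r hr h1 h2 h3
  rcases hp with rfl | hp <;> rcases hq with rfl | hq <;> rcases hr with rfl | hr <;>
    try contradiction
  · exact ha q hq r hr h3
  · rw [ori_rot]; exact ha r hr p hp h2.symm
  · rw [← ori_rot]; exact ha p hp q hq h1
  · exact h p hp q hq r hr h1 h2 h3

lemma PP_insert {a c : Pt} {S : Set Pt} (h : PP a S) (hc : ∀ q ∈ S, ori a c q ≠ 0) :
    PP a (insert c S) := by
  intro q hq r hr h1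
  rcases hq with rfl | hq <;> rcases hr with rfl | hr <;> try contradiction
  · exact hc r hr
  · rw [ori_swap, neg_ne_zero]; exact hc q hq
  · exact h q hq r hr h1
section gp
variable {X Y Z M : ℝ} {a p q r : Pt}

lemma g_ZZZ (hX : 3 ≤ X) (hY : 3 * X ≤ Y) (hZ : 3 * Y ≤ Z) (hp : p = tp X ∨ p = bt X)
    (hq : q = tp Y ∨ q = bt Y) (hr : r = tp Z ∨ r = bt Z) : ori p q r ≠ 0 := by
  have hY' : 3 ≤ Y := by linarith
  have hZ' : 3 ≤ Z := by linarith
  obtain ⟨e1, p1, q1⟩ := ip1 hX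
  obtain ⟨e2, p2, q2⟩ := ip1 hY'
  obtain ⟨e3, p3, q3⟩ := ip1 hZ'
  obtain ⟨c1,c2,c3,c4,c5,c6,c7⟩ := ip2 3 hX hY' hY
  obtain ⟨d1,d2,d3,d4,d5,d6,d7⟩ := ip2 3 hY' hZ' hZ
  obtain ⟨g1,g2,g3,g4,g5,g6,g7⟩ := ip2 9 hX hZ' (by linarith)
  obtain ⟨k1,k2⟩ := ip3 3 3 hX hY' hZ' hY hZ
  rcases hp with rfl | rfl <;> rcases hq with rfl | rfl <;> rcases hr with rfl | rfl <;>
    simp only [ori, tp, bt] <;> first | (apply ne_of_gt; linarith) | (apply ne_of_lt; linarith)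

lemma g_aZZ (ha : a = pN ∨ a = p4) (hX : 3 ≤ X) (hY : 3 * X ≤ Y) (hp : p = tp X ∨ p = bt X)
    (hq : q = tp Y ∨ q = bt Y) : ori a p q ≠ 0 := by
  have hY' : 3 ≤ Y := by linarith
  obtain ⟨e1, p1, q1⟩ := ip1 hX
  obtain ⟨e2, p2, q2⟩ := ip1 hY'
  obtain ⟨c1,c2,c3,c4,c5,c6,c7⟩ := ip2 3 hX hY' hY
  rcases ha with rfl | rfl <;> rcases hp with rfl | rfl <;> rcases hq with rfl | rfl <;>
    simp only [ori, tp, bt, pN, p4] <;> first | (apply ne_of_gt; linarith) | (apply ne_of_lt; linarith)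

lemma g_eZZ (ha : a = pF ∨ a = p3) (hX : 3 ≤ X) (hY : 3 * X = Y ∨ 9 * X = Y ∨ 27 * X ≤ Y)
    (hp : p = tp X ∨ p = bt X)
    (hq : q = tp Y ∨ q = bt Y) (hpq : 9 * X = Y → p = tp X ∧ q = tp Y ∨ p = bt X ∧ q = bt Y) :
    ori a p q ≠ 0 := by
  have hY3 : 3 * X ≤ Y := by rcases hY with h | h | h <;> linarith
  have hY' : 3 ≤ Y := by linarith
  obtain ⟨e1, p1, q1⟩ := ip1 hX
  obtain ⟨e2, p2, q2⟩ := ip1 hY'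
  obtain ⟨c1,c2,c3,c4,c5,c6,c7⟩ := ip2 3 hX hY' hY3
  rcases hY with h | h | h
  · have z1 := (ip2 (1/3) hY' hX (by linarith)).2.1
    rcases ha with rfl | rfl <;> rcases hp with rfl | rfl <;> rcases hq with rfl | rfl <;>
    simp only [ori, tp, bt, pF, _root_.p3] <;> first | (apply ne_of_gt; linarith) | (apply ne_of_lt; linarith)
  · rcases hpq h with ⟨rfl, rfl⟩ | ⟨rfl, rfl⟩ <;> rcases ha with rfl | rfl <;> 
    simp only [ori, tp, bt, pF, _root_.p3] <;> first | (apply ne_of_gt; linarith) | (apply ne_of_lt; linarith)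
  · rcases ha with rfl | rfl <;> rcases hp with rfl | rfl <;> rcases hq with rfl | rfl <;>
    simp only [ori, tp, bt, pF, _root_.p3] <;> first | (apply ne_of_gt; linarith) | (apply ne_of_lt; linarith)

lemma g_bZZ (hX : 3 ≤ X) (hY : 3 * X ≤ Y) (hM : 27 * Y ≤ M) (hp : p = tp X ∨ p = bt X)
    (hq : q = tp Y ∨ q = bt Y) (hn : M ≠ 40 * X * Y + X + Y) : ori (pb M) p q ≠ 0 := by
  have hY' : 3 ≤ Y := by linarith
  have hM' : 3 ≤ M := by linarith
  obtain ⟨e1, p1, q1⟩ := ip1 hX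
  obtain ⟨e2, p2, q2⟩ := ip1 hY'
  obtain ⟨c1,c2,c3,c4,c5,c6,c7⟩ := ip2 3 hX hY' hY
  obtain ⟨d1,d2,d3,d4,d5,d6,d7⟩ := ip2 27 hY' hM' hM
  obtain ⟨g1,g2,g3,g4,g5,g6,g7⟩ := ip2 81 hX hM' (by linarith)
  obtain ⟨k1,k2⟩ := ip3 3 27 hX hY' hM' hY hM
  rcases hp with rfl | rfl <;> rcases hq with rfl | rfl
  · have hX0 : X ≠ 0 := by linarith
    have hY0 : Y ≠ 0 := by linarith
    have e : ori (pb M) (tp X) (tp Y) = (Y - X) * (M - (40 * X * Y + X + Y)) * (-1 / (20 * X * Y)) := by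
      simp only [ori, tp, pb, ip]
      field_simp
      ring
    rw [e]
    refine mul_ne_zero (mul_ne_zero (by linarith) (sub_ne_zero.2 hn)) ?_
    have : 20 * X * Y ≠ 0 := by positivity
    exact div_ne_zero (by norm_num) this
  all_goals
    simp only [ori, tp, bt, pb]
    first | (apply ne_of_gt; linarith) | (apply ne_of_lt; linarith)

lemma g_ccZ (hX : 3 ≤ X) (hM : 27 * X ≤ M) (hp : p = tp X ∨ p = bt X) :
    ori pN (pb M) p ≠ 0 ∧ ori pF (pb M) p ≠ 0 ∧ ori p3 (pb M) p ≠ 0 ∧ ori p4 (pb M) p ≠ 0 ∧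
    ori pF pN p ≠ 0 ∧ ori p3 pN p ≠ 0 ∧ ori p4 pN p ≠ 0 ∧
    ori p3 pF p ≠ 0 ∧ ori p4 pF p ≠ 0 ∧ ori p4 p3 p ≠ 0 := by
  have hM' : 3 ≤ M := by linarith
  obtain ⟨e1, p1, q1⟩ := ip1 hX
  obtain ⟨g1,g2,g3,g4,g5,g6,g7⟩ := ip2 27 hX hM' (by linarith)
  rcases hp with rfl | rfl <;> simp only [ori, tp, bt, pN, pF, _root_.p3, p4, pb] <;>
  refine ⟨?_, ?_, ?_, ?_, ?_, ?_, ?_, ?_, ?_, ?_⟩ <;>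
  first | (apply ne_of_gt; linarith) | (apply ne_of_lt; linarith)

lemma g_ccc (hM : 81 ≤ M) :
    ori pF pN (pb M) ≠ 0 ∧ ori p3 pN (pb M) ≠ 0 ∧ ori p4 pN (pb M) ≠ 0 ∧
    ori p3 pF (pb M) ≠ 0 ∧ ori p4 pF (pb M) ≠ 0 ∧ ori p4 p3 (pb M) ≠ 0 ∧
    ori p3 pF pN ≠ 0 ∧ ori p4 pF pN ≠ 0 ∧ ori p4 p3 pN ≠ 0 ∧ ori p4 p3 pF ≠ 0 := by
  simp only [ori, tp, bt, pN, pF, _root_.p3, p4, pb]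
  refine ⟨?_, ?_, ?_, ?_, ?_, ?_, ?_, ?_, ?_, ?_⟩ <;>
  first | (apply ne_of_gt; linarith) | (apply ne_of_lt; linarith)

end gp
/-- The zigzag points. -/
def z (j : ℕ) : Pt := if j % 2 = 1 then tp (3 ^ j) else bt (3 ^ j)
def Zs (m : ℕ) : Finset Pt := (Finset.Icc 1 m).image z
def Mm (m : ℕ) : ℝ := 27 * 3 ^ m
def As : Finset Pt := {pF, pN, p3, p4}
def Bs (m : ℕ) : Finset Pt := insert (pb (Mm m)) (Zs m)

lemma z_odd {j : ℕ} (h : j % 2 = 1) : z j = tp (3 ^ j) := by simp [z, h]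
lemma z_even {j : ℕ} (h : j % 2 = 0) : z j = bt (3 ^ j) := by simp [z, h]
lemma z_or (j : ℕ) : z j = tp (3 ^ j) ∨ z j = bt (3 ^ j) := by unfold z; split_ifs <;> simp
lemma z_fst (j : ℕ) : (z j).1 = 3 ^ j := by rcases z_or j with h | h <;> rw [h] <;> rfl

lemma z_inj : Function.Injective z := by
  intro i j h
  have := congrArg Prod.fst h
  rw [z_fst, z_fst] at this
  exact pow_right_injective₀ (by norm_num : (0:ℝ) < 3) (by norm_num) this

lemma pge {i : ℕ} (h : 1 ≤ i) : (3:ℝ) ≤ 3 ^ i := by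
  calc (3:ℝ) = 3 ^ 1 := by norm_num
    _ ≤ 3 ^ i := pow_le_pow_right₀ (by norm_num) h

lemma pw {i j : ℕ} (d : ℕ) (h : i + d ≤ j) : (3:ℝ) ^ d * 3 ^ i ≤ 3 ^ j := by
  rw [← pow_add]; exact pow_le_pow_right₀ (by norm_num) (by omega)
lemma pw0 {i j : ℕ} (h : i ≤ j) : (3:ℝ) ^ i ≤ 3 ^ j := pow_le_pow_right₀ (by norm_num) h
lemma pw1 {i j : ℕ} (h : i + 1 ≤ j) : 3 * (3:ℝ) ^ i ≤ 3 ^ j := by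
  have := pw 1 h; norm_num at this; exact this
lemma pw2 {i j : ℕ} (h : i + 2 ≤ j) : 9 * (3:ℝ) ^ i ≤ 3 ^ j := by
  have := pw 2 h; norm_num at this; exact this
lemma pw3 {i j : ℕ} (h : i + 3 ≤ j) : 27 * (3:ℝ) ^ i ≤ 3 ^ j := by
  have := pw 3 h; norm_num at this; exact this
lemma pwm1 {i j : ℕ} (h : i ≤ j + 1) : (3:ℝ) ^ i ≤ 3 * 3 ^ j := by
  have := pw0 h; rw [pow_succ] at this; linarith
lemma pe1 {i j : ℕ} (h : i + 1 = j) : 3 * (3:ℝ) ^ i = 3 ^ j := by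
  rw [← h, pow_succ]; ring
lemma pe2 {i j : ℕ} (h : i + 2 = j) : 9 * (3:ℝ) ^ i = 3 ^ j := by
  rw [← h, pow_add]; ring
lemma pM {i m : ℕ} (h : i ≤ m) : 27 * (3:ℝ) ^ i ≤ Mm m := by
  unfold Mm; have := pw0 h; linarith

lemma card_le_one_of {s : Finset ℕ} (h : ∀ i ∈ s, ∀ j ∈ s, i < j → False) : s.card ≤ 1 := by
  rw [Finset.card_le_one]
  intro a ha b hb
  rcases lt_trichotomy a b with h1 | h1 | h1
  · exact (h a ha b hb h1).elim
  · exact h1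
  · exact (h b hb a ha h1).elim

lemma card_le_two_of {s : Finset ℕ}
    (h : ∀ i ∈ s, ∀ j ∈ s, ∀ k ∈ s, i < j → j < k → False) : s.card ≤ 2 := by
  by_contra hc
  obtain ⟨a, ha, b, hb, c, hcc, h1, h2, h3⟩ := Finset.two_lt_card.1 (not_le.1 hc)
  rcases lt_or_gt_of_ne h1 with h1 | h1 <;> rcases lt_or_gt_of_ne h2 with h2 | h2 <;>
    rcases lt_or_gt_of_ne h3 with h3 | h3
  · exact h a ha b hb c hcc h1 h3
  · exact h a ha c hcc b hb h2 h3
  · omega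
  · exact h c hcc a ha b hb h2 h1
  · exact h b hb a ha c hcc h1 h2
  · omega
  · exact h b hb c hcc a ha h3 h2
  · exact h c hcc b hb a ha h3 h1

lemma exists_two {s : Finset ℕ} (h : 2 ≤ s.card) : ∃ i ∈ s, ∃ j ∈ s, i < j := by
  by_contra hc
  push Not at hc
  have := card_le_one_of (s := s) (fun i hi j hj hij => absurd (hc i hi j hj) (not_le.2 hij))
  omega

lemma exists_one {s : Finset ℕ} (h : 1 ≤ s.card) : ∃ i, i ∈ s := by
  exact Finset.card_pos.1 h

lemma memT {m i : ℕ} (h1 : 1 ≤ i) (h2 : i ≤ m) (h3 : i % 2 = 1) : tp (3 ^ i) ∈ As ∪ Bs m := by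
  rw [← z_odd h3]
  simp only [Bs, Zs, Finset.mem_union, Finset.mem_insert, Finset.mem_image]
  exact Or.inr (Or.inr ⟨i, Finset.mem_Icc.2 ⟨h1, h2⟩, rfl⟩)

lemma memU {m i : ℕ} (h1 : 1 ≤ i) (h2 : i ≤ m) (h3 : i % 2 = 0) : bt (3 ^ i) ∈ As ∪ Bs m := by
  rw [← z_even h3]
  simp only [Bs, Zs, Finset.mem_union, Finset.mem_insert, Finset.mem_image]
  exact Or.inr (Or.inr ⟨i, Finset.mem_Icc.2 ⟨h1, h2⟩, rfl⟩)

lemma memN {m : ℕ} : pN ∈ As ∪ Bs m := by simp [As]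
lemma mem3 {m : ℕ} : p3 ∈ As ∪ Bs m := by simp [As]
lemma memF {m : ℕ} : pF ∈ As ∪ Bs m := by simp [As]
lemma mem4 {m : ℕ} : p4 ∈ As ∪ Bs m := by simp [As]
lemma memb {m : ℕ} : pb (Mm m) ∈ As ∪ Bs m := by simp [Bs]

open Classical in
lemma count_le {m : ℕ} {H : Finset Pt} (hH : H ⊆ As ∪ Bs m) (ht hu : Finset ℕ)
    (hht : ∀ i, i ∈ ht ↔ (1 ≤ i ∧ i ≤ m) ∧ i % 2 = 1 ∧ tp (3 ^ i) ∈ H)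
    (hhu : ∀ i, i ∈ hu ↔ (1 ≤ i ∧ i ≤ m) ∧ i % 2 = 0 ∧ bt (3 ^ i) ∈ H) :
    H.card ≤ (if pF ∈ H then 1 else 0) + (if pN ∈ H then 1 else 0) + (if p3 ∈ H then 1 else 0)
      + (if p4 ∈ H then 1 else 0) + (if pb (Mm m) ∈ H then 1 else 0) + ht.card + hu.card := by
  have g : ∀ a : Pt, (if a ∈ H then ({a} : Finset Pt) else ∅).card = if a ∈ H then 1 else 0 := by
    intro a; split_ifs <;> simp
  have gm : ∀ a ∈ H, a ∈ (if a ∈ H then ({a} : Finset Pt) else ∅) := by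
    intro a ha; simp [ha]
  rw [← g pF, ← g pN, ← g p3, ← g p4, ← g (pb (Mm m))]
  have sub : H ⊆ (((((((if pF ∈ H then ({pF} : Finset Pt) else ∅) ∪ (if pN ∈ H then ({pN} : Finset Pt) else ∅))
      ∪ (if p3 ∈ H then ({p3} : Finset Pt) else ∅)) ∪ (if p4 ∈ H then ({p4} : Finset Pt) else ∅))
      ∪ (if pb (Mm m) ∈ H then ({pb (Mm m)} : Finset Pt) else ∅)) ∪ ht.image (fun i => tp (3 ^ i)))
      ∪ hu.image (fun i => bt (3 ^ i))) := by
    intro x hx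
    have hxC := hH hx
    simp only [As, Bs, Zs, Finset.mem_union, Finset.mem_insert, Finset.mem_image,
      Finset.mem_singleton, Finset.mem_Icc] at hxC
    simp only [Finset.mem_union, Finset.mem_image]
    rcases hxC with (rfl | rfl | rfl | rfl) | rfl | ⟨i, hi, rfl⟩
    · have := gm _ hx; tauto
    · have := gm _ hx; tauto
    · have := gm _ hx; tauto
    · have := gm _ hx; tauto
    · have := gm _ hx; tauto
    · rcases Nat.mod_two_eq_zero_or_one i with h | h
      · right; rw [z_even h] at hx ⊢; exact ⟨i, (hhu i).2 ⟨hi, h, hx⟩, rfl⟩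
      · left; right; rw [z_odd h] at hx ⊢; exact ⟨i, (hht i).2 ⟨hi, h, hx⟩, rfl⟩
  refine (Finset.card_le_card sub).trans ?_
  refine (Finset.card_union_le _ _).trans (add_le_add ?_ Finset.card_image_le)
  refine (Finset.card_union_le _ _).trans (add_le_add ?_ Finset.card_image_le)
  refine (Finset.card_union_le _ _).trans (add_le_add ?_ le_rfl)
  refine (Finset.card_union_le _ _).trans (add_le_add ?_ le_rfl)
  refine (Finset.card_union_le _ _).trans (add_le_add ?_ le_rfl)
  exact Finset.card_union_le _ _
lemma count_logic {f n t q : Prop} [Decidable f] [Decidable n] [Decidable t] [Decidable q] {x y : ℕ} (hx : x ≤ 1) (hy : y ≤ 1)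
    (cnt : 5 ≤ (if f then 1 else 0) + (if n then 1 else 0) + (if t then 1 else 0)
      + (if q then 1 else 0) + 0 + x + y) (hn : ¬ (f ∧ q ∧ n)) :
    1 ≤ x ∧ 1 ≤ y ∧ t ∧ (n ∨ (f ∧ q)) := by
  by_cases h1 : f <;> by_cases h2 : n <;> by_cases h3 : t <;> by_cases h4 : q <;>
    simp only [h1, h2, h3, h4, if_true, if_false, true_and, and_true, false_and, and_false,
      not_true_eq_false, true_or, or_true, or_false, false_or] at cnt hn ⊢ <;> omega

set_option maxHeartbeats 1000000 in
open Classical in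
lemma no_hole {m : ℕ} (hm : 4 ≤ m) {H : Finset Pt} (hH : IsKHole 5 (As ∪ Bs m) H)
    (hA : pF ∈ H ∨ pN ∈ H ∨ p3 ∈ H ∨ p4 ∈ H) : False := by
  have kill : ∀ {x p q r : Pt}, InT x p q r → x ∈ As ∪ Bs m → p ∈ H → q ∈ H → r ∈ H → False :=
    fun h hx hp hq hr => hole_kill hH h hx hp hq hr
  set b := pb (Mm m) with hb
  set ht : Finset ℕ := (Finset.Icc 1 m).filter (fun i => i % 2 = 1 ∧ tp (3 ^ i) ∈ H) with htd
  set hu : Finset ℕ := (Finset.Icc 1 m).filter (fun i => i % 2 = 0 ∧ bt (3 ^ i) ∈ H) with hud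
  have hht : ∀ i, i ∈ ht ↔ (1 ≤ i ∧ i ≤ m) ∧ i % 2 = 1 ∧ tp (3 ^ i) ∈ H := by
    intro i; rw [htd]; simp only [Finset.mem_filter, Finset.mem_Icc]
  have hhu : ∀ i, i ∈ hu ↔ (1 ≤ i ∧ i ≤ m) ∧ i % 2 = 0 ∧ bt (3 ^ i) ∈ H := by
    intro i; rw [hud]; simp only [Finset.mem_filter, Finset.mem_Icc]
  clear_value ht hu
  have cnt := count_le hH.1 ht hu hht hhu
  rw [hH.2.1, ← hb] at cnt
  -- the four points of A are not all in H
  have hn4 : ¬ (pF ∈ H ∧ p4 ∈ H ∧ pN ∈ H) := fun ⟨h1, h2, h3⟩ => kill f3 mem3 h1 h2 h3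
  have above_ht : ∀ a, (a = pF ∨ a = pN) → a ∈ H → ht.card ≤ 2 := by
    intro a ha haH
    apply card_le_two_of
    intro i hi j hj k hk hij hjk
    obtain ⟨⟨i1, i2⟩, i3, i4⟩ := (hht i).1 hi
    obtain ⟨⟨j1, j2⟩, j3, j4⟩ := (hht j).1 hj
    obtain ⟨⟨k1, k2⟩, k3, k4⟩ := (hht k).1 hk
    exact kill (f6a ha (pge i1) (pw2 (by omega)) (pw2 (by omega))) (memT j1 j2 j3) haH i4 k4
  have below_hu : ∀ a, (a = p3 ∨ a = p4) → a ∈ H → hu.card ≤ 2 := by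
    intro a ha haH
    apply card_le_two_of
    intro i hi j hj k hk hij hjk
    obtain ⟨⟨i1, i2⟩, i3, i4⟩ := (hhu i).1 hi
    obtain ⟨⟨j1, j2⟩, j3, j4⟩ := (hhu j).1 hj
    obtain ⟨⟨k1, k2⟩, k3, k4⟩ := (hhu k).1 hk
    exact kill (f7a ha (pge i1) (pw2 (by omega)) (pw2 (by omega))) (memU j1 j2 j3) haH k4 i4
  have above_hu : ∀ a, (a = pF ∨ a = pN) → a ∈ H → hu.card ≤ 1 := by
    intro a ha haH
    apply card_le_one_of
    intro i hi j hj hij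
    obtain ⟨⟨i1, i2⟩, i3, i4⟩ := (hhu i).1 hi
    obtain ⟨⟨j1, j2⟩, j3, j4⟩ := (hhu j).1 hj
    rcases ha with rfl | rfl
    · exact kill (f6bF (X := 3 ^ (i - 1)) (pge (by omega)) (pe1 (by omega)) (pw2 (by omega)))
        (memT (by omega) (by omega) (by omega)) haH i4 j4
    · exact kill (f6bN (X := 3 ^ (j - 1)) (pge (by omega)) (pw1 (by omega)) (pe1 (by omega)))
        (memT (by omega) (by omega) (by omega)) haH i4 j4
  have below_hub : ∀ a, (a = p3 ∨ a = p4) → a ∈ H → b ∈ H → hu.card ≤ 1 := by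
    intro a ha haH hbH
    apply card_le_one_of
    intro i hi j hj hij
    obtain ⟨⟨i1, i2⟩, i3, i4⟩ := (hhu i).1 hi
    obtain ⟨⟨j1, j2⟩, j3, j4⟩ := (hhu j).1 hj
    exact kill (f7b ha (pge i1) (pw2 (by omega)) (pM j2)) (memU j1 j2 j3) haH hbH i4
  have h4_ht : p4 ∈ H → ht.card ≤ 1 := by
    intro haH
    apply card_le_one_of
    intro i hi j hj hij
    obtain ⟨⟨i1, i2⟩, i3, i4⟩ := (hht i).1 hi
    obtain ⟨⟨j1, j2⟩, j3, j4⟩ := (hht j).1 hj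
    exact kill (f7f4 (U := 3 ^ (i + 1)) (pge i1) (pe1 rfl) (pw2 (by omega)))
      (memU (by omega) (by omega) (by omega)) haH j4 i4
  -- above and below points simultaneously
  have mixed : ∀ a a', (a = pF ∨ a = pN) → (a' = p3 ∨ a' = p4) → a ∈ H → a' ∈ H → False := by
    intro a a' ha ha' haH haH'
    have c1 : ht.card ≤ 1 := by
      apply card_le_one_of
      intro i hi j hj hij
      obtain ⟨⟨i1, i2⟩, i3, i4⟩ := (hht i).1 hi
      obtain ⟨⟨j1, j2⟩, j3, j4⟩ := (hht j).1 hj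
      exact kill (f2T ha ha' (pge i1) (pw2 (by omega))) (memT i1 i2 i3) haH haH' j4
    have c2 : hu.card ≤ 1 := above_hu a ha haH
    have hbH : b ∉ H := by
      intro hbH
      have d1 : ht.card = 0 := by
        rw [Finset.card_eq_zero, Finset.eq_empty_iff_forall_notMem]
        intro i hi
        obtain ⟨⟨i1, i2⟩, i3, i4⟩ := (hht i).1 hi
        exact kill (f1T ha ha' (pge i1) (pM i2)) (memT i1 i2 i3) haH haH' hbH
      have d2 : hu.card = 0 := by
        rw [Finset.card_eq_zero, Finset.eq_empty_iff_forall_notMem]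
        intro i hi
        obtain ⟨⟨i1, i2⟩, i3, i4⟩ := (hhu i).1 hi
        exact kill (f1U ha ha' (pge i1) (pM i2)) (memU i1 i2 i3) haH haH' hbH
      rw [d1, d2] at cnt
      apply hn4
      by_cases h1 : pF ∈ H <;> by_cases h2 : p4 ∈ H <;> by_cases h3 : pN ∈ H <;>
        simp only [h1, h2, h3, if_true, if_false] at cnt ⊢ <;>
        first | exact ⟨trivial, trivial, trivial⟩ | (split_ifs at cnt <;> omega)
    rw [if_neg hbH] at cnt
    have e1 := count_logic c1 c2 cnt hn4
    obtain ⟨e1, e2, e3, e4⟩ := e1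
    obtain ⟨i, hi⟩ := exists_one e1
    obtain ⟨j, hj⟩ := exists_one e2
    obtain ⟨⟨i1, i2⟩, i3, i4⟩ := (hht i).1 hi
    obtain ⟨⟨j1, j2⟩, j3, j4⟩ := (hhu j).1 hj
    have i0 : i = 1 := by
      by_contra hne
      exact kill (f2T (X := 3 ^ 1) ha ha' (pge le_rfl) (pw2 (by omega)))
        (memT le_rfl (by omega) rfl) haH haH' i4
    have j0 : j = 2 := by
      by_contra hne
      exact kill (f2U (X := 3 ^ 2) ha ha' (pge (by omega)) (pw2 (by omega)))
        (memU (by omega) (by omega) rfl) haH haH' j4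
    subst i0 j0
    norm_num at i4 j4
    have mt : tp 3 ∈ As ∪ Bs m := by
      have := memT (m := m) (i := 1) le_rfl (by omega) rfl
      norm_num at this ⊢
      exact this
    rcases e4 with h | ⟨h, h'⟩
    · exact kill (f4 (Or.inl rfl)) mt h e3 j4
    · exact kill f4' mem3 h h' j4
  by_cases hab : pF ∈ H ∨ pN ∈ H
  · -- only points above
    have h3 : p3 ∉ H := fun h => by
      rcases hab with h1 | h1
      · exact mixed _ _ (Or.inl rfl) (Or.inl rfl) h1 h
      · exact mixed _ _ (Or.inr rfl) (Or.inl rfl) h1 h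
    have h4 : p4 ∉ H := fun h => by
      rcases hab with h1 | h1
      · exact mixed _ _ (Or.inl rfl) (Or.inr rfl) h1 h
      · exact mixed _ _ (Or.inr rfl) (Or.inr rfl) h1 h
    have c1 : ht.card ≤ 2 := by
      rcases hab with h1 | h1
      · exact above_ht _ (Or.inl rfl) h1
      · exact above_ht _ (Or.inr rfl) h1
    have c2 : hu.card ≤ 1 := by
      rcases hab with h1 | h1
      · exact above_hu _ (Or.inl rfl) h1
      · exact above_hu _ (Or.inr rfl) h1
    simp only [h3, h4, if_false] at cnt
    have two : 2 ≤ ht.card ∧ 1 ≤ hu.card := by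
      by_cases hF : pF ∈ H <;> by_cases hN : pN ∈ H <;> by_cases hbH : b ∈ H <;>
        simp only [hF, hN, hbH, if_true, if_false] at cnt hab <;> try (constructor <;> omega)
      · exfalso
        have d1 : ht.card = 0 := by
          rw [Finset.card_eq_zero, Finset.eq_empty_iff_forall_notMem]
          intro i hi
          obtain ⟨⟨i1, i2⟩, i3, i4⟩ := (hht i).1 hi
          exact kill (f5T (pge i1) (pM i2)) memN hF i4 hbH
        omega
      all_goals simp at hab
    obtain ⟨i, hi, j, hj, hij⟩ := exists_two two.1
    obtain ⟨k, hk⟩ := exists_one two.2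
    obtain ⟨⟨i1, i2⟩, i3, i4⟩ := (hht i).1 hi
    obtain ⟨⟨j1, j2⟩, j3, j4⟩ := (hht j).1 hj
    obtain ⟨⟨k1, k2⟩, k3, k4⟩ := (hhu k).1 hk
    by_cases hF : pF ∈ H
    · by_cases hN : pN ∈ H
      · rcases lt_or_ge k i with h | h
        · exact kill (f6cN (pge k1) (pw1 h) (pw2 (by omega))) (memT i1 i2 i3) hN k4 j4
        rcases lt_or_ge j k with h' | h'
        · exact kill (f6d (Or.inr ⟨rfl, pw1 h'⟩) (pge i1) (pw2 (by omega))) (memT j1 j2 j3) hN i4 k4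
        by_cases hki : k = i + 1
        · exact kill (f6cF (pge i1) (pe1 hki.symm) (pw2 (by omega))) (memT i1 i2 i3) hF k4 j4
        · exact kill (f6a (Y := 3 ^ (i + 2)) (Or.inr rfl) (pge i1) (pw2 (by omega)) (pw2 (by omega)))
            (memT (by omega) (by omega) (by omega)) hN i4 j4
      · have hbH : b ∈ H := by
          by_contra hbH
          simp only [hF, hN, hbH, if_true, if_false] at cnt
          omega
        rcases le_or_gt (j + 3) k with h | h
        · exact kill (f6d (Or.inl ⟨rfl, pw3 h⟩) (pge i1) (pw2 (by omega))) (memT j1 j2 j3) hF i4 k4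
        · exact kill (f6eF (pge k1) (pge j1) (pwm1 (by omega)) (pM j2)) (memT j1 j2 j3) hF k4 hbH
    · have hN : pN ∈ H := by tauto
      have hbH : b ∈ H := by
        by_contra hbH
        simp only [hF, hN, hbH, if_true, if_false] at cnt
        omega
      rcases lt_or_ge j k with h | h
      · exact kill (f6d (Or.inr ⟨rfl, pw1 h⟩) (pge i1) (pw2 (by omega))) (memT j1 j2 j3) hN i4 k4
      · exact kill (f6eN (pge k1) (pw1 (by omega)) (pM j2)) (memT j1 j2 j3) hN k4 hbH
  · -- only points below
    have hF : pF ∉ H := fun h => hab (Or.inl h)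
    have hN : pN ∉ H := fun h => hab (Or.inr h)
    have hA' : p3 ∈ H ∨ p4 ∈ H := by tauto
    have c1 : hu.card ≤ 2 := by
      rcases hA' with h1 | h1
      · exact below_hu _ (Or.inl rfl) h1
      · exact below_hu _ (Or.inr rfl) h1
    have c2 : b ∈ H → hu.card ≤ 1 := by
      rcases hA' with h1 | h1
      · exact below_hub _ (Or.inl rfl) h1
      · exact below_hub _ (Or.inr rfl) h1
    simp only [hF, hN, if_false] at cnt
    have h3 : p3 ∈ H := by
      by_contra h3
      have h4 : p4 ∈ H := by tauto
      have := h4_ht h4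
      simp only [h3, h4, if_true, if_false] at cnt
      by_cases hbH : b ∈ H
      · have := c2 hbH
        simp only [hbH, if_true] at cnt
        omega
      · simp only [hbH, if_false] at cnt
        omega
    by_cases h4 : p4 ∈ H
    · have c3 := h4_ht h4
      simp only [h3, h4, if_true] at cnt
      have e1 : 1 ≤ ht.card := by
        by_cases hbH : b ∈ H
        · have := c2 hbH
          simp only [hbH, if_true] at cnt
          omega
        · simp only [hbH, if_false] at cnt
          omega
      obtain ⟨i, hi⟩ := exists_one e1
      obtain ⟨⟨i1, i2⟩, i3, i4⟩ := (hht i).1 hi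
      by_cases hbH : b ∈ H
      · simp only [hbH, if_true] at cnt
        obtain ⟨k, hk⟩ := exists_one (s := hu) (by omega)
        obtain ⟨⟨k1, k2⟩, k3, k4⟩ := (hhu k).1 hk
        rcases le_or_gt i (k + 1) with h | h
        · exact kill (f7e3 (pge i1) (pge k1) (pwm1 h) (pM k2)) (memU k1 k2 k3) h3 hbH i4
        · exact kill (f7d4 (V := 3 ^ (i - 1)) (pge k1) (pw2 (by omega)) (pw1 (by omega)))
            (memU (by omega) (by omega) (by omega)) h4 i4 k4
      · simp only [hbH, if_false] at cnt
        obtain ⟨k, hk, l, hl, hkl⟩ := exists_two (s := hu) (by omega)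
        obtain ⟨⟨k1, k2⟩, k3, k4⟩ := (hhu k).1 hk
        obtain ⟨⟨l1, l2⟩, l3, l4⟩ := (hhu l).1 hl
        rcases le_or_gt i (k + 1) with h | h
        · exact kill (f7c3 (pge i1) (pge k1) (pwm1 h) (pw2 (by omega))) (memU k1 k2 k3) h3 l4 i4
        rcases lt_or_ge l i with h' | h'
        · exact kill (f7d4 (pge k1) (pw2 (by omega)) (pw1 h')) (memU l1 l2 l3) h4 i4 k4
        · exact kill (f7a (Y := 3 ^ (k + 2)) (Or.inl rfl) (pge k1) (pw2 (by omega)) (pw2 (by omega)))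
            (memU (by omega) (by omega) (by omega)) h3 l4 k4
    · simp only [h3, h4, if_true, if_false] at cnt
      have two : ∀ i ∈ ht, ∀ j ∈ ht, i < j → i = 1 ∧ j = 3 := by
        intro i hi j hj hij
        obtain ⟨⟨i1, i2⟩, i3, i4⟩ := (hht i).1 hi
        obtain ⟨⟨j1, j2⟩, j3, j4⟩ := (hht j).1 hj
        by_contra hne
        exact kill (f7f3 (U := 3 ^ (j - 3)) (pge i1) (pge (by omega)) (pwm1 (by omega)) (pw3 (by omega)))
            (memU (by omega) (by omega) (by omega)) h3 j4 i4
      have c3 : ht.card ≤ 2 := by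
        apply card_le_two_of
        intro i hi j hj k hk hij hjk
        have t1 := two i hi j hj hij
        have t2 := two j hj k hk hjk
        omega
      have e2 : 2 ≤ ht.card := by
        by_cases hbH : b ∈ H
        · have := c2 hbH
          simp only [hbH, if_true] at cnt
          omega
        · simp only [hbH, if_false] at cnt
          omega
      obtain ⟨i, hi, j, hj, hij⟩ := exists_two e2
      have t1 := two i hi j hj hij
      obtain ⟨⟨i1, i2⟩, i3, i4⟩ := (hht i).1 hi
      by_cases hbH : b ∈ H
      · simp only [hbH, if_true] at cnt
        obtain ⟨k, hk⟩ := exists_one (s := hu) (by omega)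
        obtain ⟨⟨k1, k2⟩, k3, k4⟩ := (hhu k).1 hk
        exact kill (f7e3 (pge i1) (pge k1) (pwm1 (by omega)) (pM k2)) (memU k1 k2 k3) h3 hbH i4
      · simp only [hbH, if_false] at cnt
        obtain ⟨k, hk, l, hl, hkl⟩ := exists_two (s := hu) (by omega)
        obtain ⟨⟨k1, k2⟩, k3, k4⟩ := (hhu k).1 hk
        obtain ⟨⟨l1, l2⟩, l3, l4⟩ := (hhu l).1 hl
        exact kill (f7c3 (pge i1) (pge k1) (pwm1 (by omega)) (pw2 (by omega))) (memU k1 k2 k3) h3 l4 i4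
lemma gp_all {m : ℕ} (hm : 4 ≤ m) : GP (↑(As ∪ Bs m) : Set Pt) := by
  have hcoe : (↑(As ∪ Bs m) : Set Pt) =
      insert p4 (insert p3 (insert pF (insert pN (insert (pb (Mm m)) (↑(Zs m) : Set Pt))))) := by
    ext x
    simp only [As, Bs, Finset.coe_union, Finset.coe_insert, Finset.coe_singleton, Set.mem_union,
      Set.mem_insert_iff, Set.mem_singleton_iff]
    tauto
  have hZ : ∀ x ∈ (↑(Zs m) : Set Pt), ∃ i, 1 ≤ i ∧ i ≤ m ∧ x = z i := by
    intro x hx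
    simp only [Zs, Finset.coe_image, Set.mem_image, Finset.coe_Icc, Set.mem_Icc] at hx
    obtain ⟨i, hi, rfl⟩ := hx
    exact ⟨i, hi.1, hi.2, rfl⟩
  have PPof : ∀ a, (∀ i j, 1 ≤ i → i < j → j ≤ m → ori a (z i) (z j) ≠ 0) → PP a ↑(Zs m) := by
    intro a h q hq r hr hqr
    obtain ⟨i, i1, i2, rfl⟩ := hZ q hq
    obtain ⟨j, j1, j2, rfl⟩ := hZ r hr
    rcases lt_trichotomy i j with h1 | h1 | h1
    · exact h i j i1 h1 j2
    · exact absurd (congrArg z h1) hqr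
    · rw [ori_swap, neg_ne_zero]; exact h j i j1 h1 i2
  have gZ : GP (↑(Zs m) : Set Pt) := by
    have key : ∀ i j k, 1 ≤ i → i < j → j < k → ori (z i) (z j) (z k) ≠ 0 := fun i j k h1 h2 h3 =>
      g_ZZZ (pge h1) (pw1 h2) (pw1 h3) (z_or i) (z_or j) (z_or k)
    intro p hp q hq r hr hpq hpr hqr
    obtain ⟨i, i1, i2, rfl⟩ := hZ p hp
    obtain ⟨j, j1, j2, rfl⟩ := hZ q hq
    obtain ⟨k, k1, k2, rfl⟩ := hZ r hr
    have h1 : i ≠ j := fun h => hpq (congrArg z h)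
    have h2 : i ≠ k := fun h => hpr (congrArg z h)
    have h3 : j ≠ k := fun h => hqr (congrArg z h)
    rcases lt_or_gt_of_ne h1 with h1 | h1 <;> rcases lt_or_gt_of_ne h2 with h2 | h2 <;>
      rcases lt_or_gt_of_ne h3 with h3 | h3
    · exact key i j k i1 h1 h3
    · rw [ori_swap, neg_ne_zero]; exact key i k j i1 h2 h3
    · omega
    · rw [← ori_rot]; exact key k i j k1 h2 h1
    · rw [ori_rot, ori_swap, neg_ne_zero]; exact key j i k j1 h1 h2
    · omega
    · rw [ori_rot]; exact key j k i j1 h3 h2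
    · rw [← ori_rot, ori_swap, neg_ne_zero]; exact key k j i k1 h3 h1
  have Pa : ∀ a, (a = pN ∨ a = p4) → PP a ↑(Zs m) := fun a ha =>
    PPof a fun i j h1 h2 _ => g_aZZ ha (pge h1) (pw1 h2) (z_or i) (z_or j)
  have Pe : ∀ a, (a = pF ∨ a = p3) → PP a ↑(Zs m) := by
    intro a ha
    refine PPof a fun i j h1 h2 _ => g_eZZ ha (pge h1) ?_ (z_or i) (z_or j) ?_
    · rcases Nat.lt_or_ge (i + 2) j with h | h
      · exact Or.inr (Or.inr (pw3 h))
      · rcases Nat.lt_or_ge (i + 1) j with h' | h'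
        · exact Or.inr (Or.inl (pe2 (by omega)))
        · exact Or.inl (pe1 (by omega))
    · intro h
      have hij : i + 2 = j := by
        rw [show (9:ℝ) = 3 ^ 2 by norm_num, ← pow_add] at h
        have := pow_right_injective₀ (by norm_num : (0:ℝ) < 3) (by norm_num) h
        omega
      rcases Nat.mod_two_eq_zero_or_one i with h' | h'
      · exact Or.inr ⟨z_even h', z_even (by omega)⟩
      · exact Or.inl ⟨z_odd h', z_odd (by omega)⟩
  have Pb : PP (pb (Mm m)) ↑(Zs m) := by
    refine PPof _ fun i j h1 h2 h3 => g_bZZ (pge h1) (pw1 h2) (pM h3) (z_or i) (z_or j) ?_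
    intro h
    unfold Mm at h
    have h' : 27 * 3 ^ m = 40 * 3 ^ i * 3 ^ j + 3 ^ i + 3 ^ j := by exact_mod_cast h
    obtain ⟨d, rfl⟩ : ∃ d, j = i + (d + 1) := ⟨j - i - 1, by omega⟩
    obtain ⟨e, rfl⟩ : ∃ e, m = i + e := ⟨m - i, by omega⟩
    have h0 : 0 < 3 ^ i := by positivity
    have h5 : 3 ^ i * (27 * 3 ^ e) = 3 ^ i * (40 * (3 ^ (i + (d + 1))) + 1 + 3 ^ (d + 1)) := by
      have t1 : 3 ^ (i + e) = 3 ^ i * 3 ^ e := pow_add 3 i e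
      have t2 : 3 ^ (i + (d + 1)) = 3 ^ i * 3 ^ (d + 1) := pow_add 3 i (d + 1)
      rw [t1] at h'
      calc 3 ^ i * (27 * 3 ^ e) = 27 * (3 ^ i * 3 ^ e) := by ring
        _ = _ := h'
        _ = 3 ^ i * (40 * (3 ^ (i + (d + 1))) + 1) + 3 ^ (i + (d + 1)) := by ring
        _ = 3 ^ i * (40 * (3 ^ (i + (d + 1))) + 1) + 3 ^ i * 3 ^ (d + 1) := by rw [← t2]
        _ = _ := by ring
    have h6 := Nat.eq_of_mul_eq_mul_left h0 h5
    rw [← add_assoc, pow_succ, pow_succ] at h6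
    omega
  have hM : 81 ≤ Mm m := by
    unfold Mm
    have := pge (i := m) (by omega)
    linarith
  obtain ⟨w1, w2, w3, w4, w5, w6, w7, w8, w9, w10⟩ := g_ccc hM
  have cz : ∀ x ∈ (↑(Zs m) : Set Pt),
      ori pN (pb (Mm m)) x ≠ 0 ∧ ori pF (pb (Mm m)) x ≠ 0 ∧ ori p3 (pb (Mm m)) x ≠ 0 ∧
      ori p4 (pb (Mm m)) x ≠ 0 ∧ ori pF pN x ≠ 0 ∧ ori p3 pN x ≠ 0 ∧ ori p4 pN x ≠ 0 ∧
      ori p3 pF x ≠ 0 ∧ ori p4 pF x ≠ 0 ∧ ori p4 p3 x ≠ 0 := fun x hx => by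
    obtain ⟨i, i1, i2, rfl⟩ := hZ x hx
    exact g_ccZ (M := Mm m) (pge i1) (pM i2) (z_or i)
  rw [hcoe]
  have P1 := PP_insert (Pa pN (Or.inl rfl)) (fun q hq => (cz q hq).1)
  have P2 := PP_insert (PP_insert (Pe pF (Or.inl rfl)) (fun q hq => (cz q hq).2.1))
    (c := pN) (by
      rintro q (rfl | hq)
      · exact w1
      · exact (cz q hq).2.2.2.2.1)
  have P3 := PP_insert (PP_insert (PP_insert (Pe p3 (Or.inr rfl)) (fun q hq => (cz q hq).2.2.1))
    (c := pN) (by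
      rintro q (rfl | hq)
      · exact w2
      · exact (cz q hq).2.2.2.2.2.1)) (c := pF) (by
      rintro q (rfl | rfl | hq)
      · exact w7
      · exact w4
      · exact (cz q hq).2.2.2.2.2.2.2.1)
  have P4 := PP_insert (PP_insert (PP_insert (PP_insert (Pa p4 (Or.inr rfl)) (fun q hq => (cz q hq).2.2.2.1))
    (c := pN) (by
      rintro q (rfl | hq)
      · exact w3
      · exact (cz q hq).2.2.2.2.2.2.1)) (c := pF) (by
      rintro q (rfl | rfl | hq)
      · exact w8
      · exact w5
      · exact (cz q hq).2.2.2.2.2.2.2.2.1)) (c := p3) (by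
      rintro q (rfl | rfl | rfl | hq)
      · exact w10
      · exact w9
      · exact w6
      · exact (cz q hq).2.2.2.2.2.2.2.2.2)
  exact GP_insert (GP_insert (GP_insert (GP_insert (GP_insert gZ Pb) P1) P2) P3) P4

lemma ConvexPos.mono' {S T : Set Pt} (h : ConvexPos T) (hST : S ⊆ T) : ConvexPos S :=
  fun p hp hc => h p (hST hp) (convexHull_mono (Set.sdiff_subset_sdiff_left hST) hc)

lemma not_seg {p q r : Pt} (h : ori p q r ≠ 0) {S : Set Pt} (hS : S ⊆ {q, r}) :
    p ∉ convexHull ℝ S := by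
  intro hp
  have hp' := convexHull_mono hS hp
  rw [convexHull_pair] at hp'
  obtain ⟨a, b, ha, hb, hab, rfl⟩ := hp'
  apply h
  obtain rfl : a = 1 - b := by linarith
  simp only [ori, Prod.fst_add, Prod.snd_add, Prod.smul_fst, Prod.smul_snd, smul_eq_mul]
  ring

lemma conv3 {p q r : Pt} (h : ori p q r ≠ 0) : ConvexPos ({p, q, r} : Set Pt) := by
  rintro x (rfl | rfl | rfl)
  · exact not_seg h (by rintro y ⟨(rfl | rfl | rfl), hy⟩ <;> simp_all)
  · exact not_seg (p := x) (q := r) (r := p) (by rwa [← ori_rot])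
      (by rintro y ⟨(rfl | rfl | rfl), hy⟩ <;> simp_all)
  · exact not_seg (p := x) (q := p) (r := q) (by rwa [ori_rot])
      (by rintro y ⟨(rfl | rfl | rfl), hy⟩ <;> simp_all)

lemma half_lt (s k c : ℝ) : Convex ℝ {p : Pt | s * p.2 - k * p.1 < c} := by
  apply convex_halfSpace_lt (f := fun p : Pt => s * p.2 - k * p.1)
  constructor
  · intro x y; simp; ring
  · intro a x; simp; ring

lemma amgm {X Y : ℝ} (hX : 3 ≤ X) (hY : 3 ≤ Y) (h : X ≠ Y) :
    2 * ip X < ip Y + Y * (ip X / X) := by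
  have hX0 : 0 < X := by linarith
  have hY0 : 0 < Y := by linarith
  have : ip Y + Y * (ip X / X) - 2 * ip X = (X - Y) ^ 2 / (20 * X ^ 2 * Y) := by
    unfold ip; field_simp; ring
  have h2 : 0 < (X - Y) ^ 2 / (20 * X ^ 2 * Y) := by
    have : X - Y ≠ 0 := sub_ne_zero.2 h
    positivity
  linarith

lemma conv_Z (m : ℕ) : ConvexPos (↑(Zs m) : Set Pt) := by
  have hZ : ∀ x ∈ (↑(Zs m) : Set Pt), ∃ i, 1 ≤ i ∧ i ≤ m ∧ x = z i := by
    intro x hx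
    simp only [Zs, Finset.coe_image, Set.mem_image, Finset.coe_Icc, Set.mem_Icc] at hx
    obtain ⟨i, hi, rfl⟩ := hx
    exact ⟨i, hi.1, hi.2, rfl⟩
  intro p hp hc
  obtain ⟨i, i1, i2, rfl⟩ := hZ p hp
  have hX := pge i1
  set X : ℝ := 3 ^ i with hXd
  obtain ⟨s, hs⟩ : ∃ s : ℝ, (s = 1 ∧ z i = tp X) ∨ (s = -1 ∧ z i = bt X) := by
    rcases z_or i with h | h
    · exact ⟨1, Or.inl ⟨rfl, h⟩⟩
    · exact ⟨-1, Or.inr ⟨rfl, h⟩⟩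
  obtain ⟨e1, p1, q1⟩ := ip1 hX
  have hX0 : X ≠ 0 := by linarith
  have hk : X * (ip X / X) = ip X := by field_simp
  have hk0 : 0 < ip X / X := by apply div_pos p1; linarith
  have key : (↑(Zs m) \ {z i} : Set Pt) ⊆ {p : Pt | s * p.2 - (ip X / X) * p.1 < 1 - 2 * ip X} := by
    rintro y ⟨hy, hne⟩
    obtain ⟨j, j1, j2, rfl⟩ := hZ y hy
    have hij : i ≠ j := fun h => hne (by rw [h]; rfl)
    have hY := pge j1
    have hXY : X ≠ 3 ^ j := fun h => hij (pow_right_injective₀ (by norm_num : (0:ℝ) < 3) (by norm_num) h)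
    have am := amgm hX hY hXY
    obtain ⟨e2, p2, q2⟩ := ip1 hY
    have hp : 0 < (3:ℝ) ^ j * (ip X / X) := by positivity
    rcases hs with ⟨rfl, _⟩ | ⟨rfl, _⟩ <;> rcases z_or j with h | h <;> rw [h] <;>
      simp only [tp, bt, Set.mem_ofPred_eq] <;> linarith
  have := convexHull_min key (half_lt s _ _) hc
  rcases hs with ⟨rfl, h⟩ | ⟨rfl, h⟩ <;> rw [h] at this <;>
    simp only [tp, bt, Set.mem_ofPred_eq] at this <;> linarith

lemma card_As : As.card = 4 := by
  have h1 : pF ≠ pN := by simp [pF, pN]; norm_num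
  have h2 : pF ≠ p3 := by simp [pF, p3]
  have h3 : pF ≠ p4 := by simp [pF, p4]
  have h4 : pN ≠ p3 := by simp [pN, p3]
  have h5 : pN ≠ p4 := by simp [pN, p4]
  have h6 : p3 ≠ p4 := by simp [p3, p4]; norm_num
  unfold As
  rw [Finset.card_insert_of_notMem, Finset.card_insert_of_notMem, Finset.card_insert_of_notMem,
    Finset.card_singleton] <;> simp [h1, h2, h3, h4, h5, h6]

lemma card_Bs (m : ℕ) : (Bs m).card = m + 1 := by
  unfold Bs Zs
  rw [Finset.card_insert_of_notMem, Finset.card_image_of_injective _ z_inj, Nat.card_Icc]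
  · simp
  · intro h
    obtain ⟨i, hi, h⟩ := Finset.mem_image.1 h
    have := congrArg Prod.fst h
    rw [z_fst] at this
    have h2 := pM (Finset.mem_Icc.1 hi).2
    simp only [pb] at this
    have h3 := pge (Finset.mem_Icc.1 hi).1
    linarith

lemma crit {m : ℕ} (hm : 4 ≤ m) : LCritical As (Bs m) := by
  have hM : 81 ≤ Mm m := by
    unfold Mm
    have := pge (i := m) (by omega)
    linarith
  obtain ⟨w1, w2, w3, w4, w5, w6, w7, w8, w9, w10⟩ := g_ccc hM
  refine ⟨?_, ?_, ?_⟩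
  · apply not_convexPos f3 <;> simp [As]
  · obtain ⟨j, j1, j2, j3⟩ : ∃ j, j % 2 = 1 ∧ 3 ≤ j ∧ (j = m ∨ j + 1 = m) := by
      rcases Nat.mod_two_eq_zero_or_one m with h | h
      · exact ⟨m - 1, by omega, by omega, by omega⟩
      · exact ⟨m, h, by omega, Or.inl rfl⟩
    have hz : ∀ i, 1 ≤ i → i ≤ m → z i ∈ (↑(Bs m) : Set Pt) := by
      intro i h1 h2
      simp only [Bs, Zs, Finset.coe_insert, Finset.coe_image, Finset.coe_Icc]
      exact Or.inr ⟨i, ⟨h1, h2⟩, rfl⟩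
    have f := f8 (X := 3 ^ (j - 2)) (Y := 3 ^ j) (U := 3 ^ (j - 1)) (M := Mm m) (pge (by omega))
      (pe2 (by omega)) (pe1 (by omega)) (pM (by omega)) (by
        unfold Mm; have := pwm1 (i := m) (j := j) (by omega); linarith)
    rw [← z_odd (by omega), ← z_odd (by omega), ← z_even (by omega)] at f
    exact not_convexPos f (hz _ (by omega) (by omega)) (hz _ (by omega) (by omega))
      (hz _ (by omega) (by omega)) (by simp [Bs])
  · intro x hx hfr
    rcases Finset.mem_union.1 hx with hx | hx
    · left
      simp only [As, Finset.mem_insert, Finset.mem_singleton] at hx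
      rcases hx with rfl | rfl | rfl | rfl
      · exact (conv3 w9).mono' (by intro y; simp [As]; tauto)
      · exact (conv3 w10).mono' (by intro y; simp [As]; tauto)
      · exact (conv3 w8).mono' (by intro y; simp [As]; tauto)
      · exact (conv3 w7).mono' (by intro y; simp [As]; tauto)
    · right
      rcases Finset.mem_insert.1 hx with rfl | hx
      · exact (conv_Z m).mono' (by intro y; simp [Bs]; tauto)
      · exfalso
        obtain ⟨i, hi, rfl⟩ := Finset.mem_image.1 hx
        obtain ⟨i1, i2⟩ := Finset.mem_Icc.1 hi
        rcases z_or i with h | h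
        · rw [h] at hfr
          exact inT_not_frontier (f1T (Or.inr rfl) (Or.inr rfl) (pge i1) (pM i2)) memN mem4 memb hfr
        · rw [h] at hfr
          exact inT_not_frontier (f1U (Or.inr rfl) (Or.inr rfl) (pge i1) (pM i2)) memN mem4 memb hfr

/-- **Proposition 17.** For every integer `n ≥ 5` there exist a line `ℓ` and an
`ℓ`-critical set `C = A ∪ B` in general position with `|A| = 4` and `|B| = n` such
that there is no `ℓ`-divided 5-hole in `C`. -/
theorem carrot_construction (n : ℕ) (hn : 5 ≤ n) :
    ∃ (v : Pt) (c : ℝ) (A B : Finset Pt),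
      v ≠ 0 ∧ (∀ p ∈ A, dotp v p < c) ∧ (∀ p ∈ B, c < dotp v p) ∧
      GenPos (↑(A ∪ B) : Set Pt) ∧ A.card = 4 ∧ B.card = n ∧
      LCritical A B ∧ ¬ ∃ H : Finset Pt, DividedFiveHole A B H := by
  obtain ⟨m, rfl⟩ : ∃ m, n = m + 1 := ⟨n - 1, by omega⟩
  have hm : 4 ≤ m := by omega
  refine ⟨(1, 0), 2, As, Bs m, by simp, ?_, ?_, (gp_all hm).genPos, card_As, card_Bs m, crit hm, ?_⟩
  · intro p hp
    simp only [As, Finset.mem_insert, Finset.mem_singleton] at hp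
    rcases hp with rfl | rfl | rfl | rfl <;> simp [dotp, pF, pN, p3, p4] <;> norm_num
  · intro p hp
    rcases Finset.mem_insert.1 hp with rfl | hp
    · have := pM (le_refl m)
      have := pge (i := m) (by omega)
      simp [dotp, pb]; linarith
    · obtain ⟨i, hi, rfl⟩ := Finset.mem_image.1 hp
      have := pge (Finset.mem_Icc.1 hi).1
      simp only [dotp, z_fst]; linarith
  · rintro ⟨H, hH, ⟨x, hxH, hxA⟩, _⟩
    refine no_hole hm hH ?_
    simp only [As, Finset.coe_insert, Finset.coe_singleton, Set.mem_insert_iff,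
      Set.mem_singleton_iff] at hxA
    rcases hxA with rfl | rfl | rfl | rfl
    · exact Or.inl hxH
    · exact Or.inr (Or.inl hxH)
    · exact Or.inr (Or.inr (Or.inl hxH))
    · exact Or.inr (Or.inr (Or.inr hxH))

end
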